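/- (Feedback passivation, Theorem 4.2.) Let γ ∈ (0,1) and let A ∈ ℝ^{n×n}, B ∈ ℝ^{n×m}, C ∈ ℝ^{m×n}, D ∈ ℝ^{m×m}, F ∈ ℝ^{m×n}, G ∈ ℝ^{m×m}. Let P be a real symmetric positive definite n×n matrix, and set X = P⁻¹ and Q = F·X. Assume the symmetric block matrix [[A·X + X·Aᵀ + B·Q + Qᵀ·Bᵀ, B·G − X·Cᵀ − Qᵀ·Dᵀ], [(B·G − X·Cᵀ − Qᵀ·Dᵀ)ᵀ, −D·G − Gᵀ·Dᵀ]] is negative semidefinite. Then for every continuously differentiable x : [0,∞) → ℝⁿ and continuous v : [0,∞) → ℝᵐ satisfying the closed-loop dynamics (D^γ x)(t) = (A + B·F)·x(t) + B·G·v(t) for all t ≥ 0 (Caputo derivative componentwise), the output y(t) = (C + D·F)·x(t) + D·G·v(t) and storage function V(t) = (1/2)·x(t)ᵀ P x(t) satisfy the passivity inequality (D^γ V)(t) ≤ ⟨v(t), y(t)⟩ for all t ≥ 0. -/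

import Mathlib

open MeasureTheory intervalIntegral Matrix

/-- Caputo fractional derivative of order `γ` of a real-valued function `g`. -/
noncomputable def caputo (γ : ℝ) (g : ℝ → ℝ) (t : ℝ) : ℝ :=
  (1 / Real.Gamma (1 - γ)) * ∫ s in (0:ℝ)..t, (t - s) ^ (-γ) * deriv g s

/-- Componentwise Caputo fractional derivative of a vector-valued function. -/
noncomputable def caputoVec {n : ℕ} (γ : ℝ) (x : ℝ → Fin n → ℝ) (t : ℝ) : Fin n → ℝ :=
  fun i => caputo γ (fun s => x s i) t

lemma kernel_integrable {γ : ℝ} (hγ : γ ∈ Set.Ioo (0:ℝ) 1) (t : ℝ) {f : ℝ → ℝ}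
    (hf : Continuous f) :
    IntervalIntegrable (fun s => (t - s) ^ (-γ) * f s) volume 0 t := by
  have h1 : IntervalIntegrable (fun s : ℝ => s ^ (-γ)) volume t 0 :=
    intervalIntegral.intervalIntegrable_rpow' (by linarith [hγ.2])
  have h2 := h1.comp_sub_left t
  simp only [sub_self, sub_zero] at h2
  exact h2.mul_continuousOn hf.continuousOn

lemma kernel_nonpos {γ : ℝ} (hγ : γ ∈ Set.Ioo (0:ℝ) 1) {t : ℝ} (ht : 0 ≤ t) {w : ℝ → ℝ}
    (hw : ContDiff ℝ 1 w) (hw0 : ∀ s, 0 ≤ w s) (hwt : w t = 0) :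
    ∫ s in (0:ℝ)..t, (t - s) ^ (-γ) * deriv w s ≤ 0 := by
  have hd : Differentiable ℝ w := hw.differentiable (by norm_num)
  have hcont : ContinuousOn (fun s => (t - s) ^ (-γ) * w s) (Set.Icc 0 t) := by
    have hds : Continuous (dslope w t) := by
      rw [← continuousOn_univ]
      exact (continuousOn_dslope Filter.univ_mem).2 ⟨hd.continuous.continuousOn, hd t⟩
    have h2 : Continuous (fun s => -((t - s) ^ (1 - γ) * dslope w t s)) := by
      refine (Continuous.mul ?_ hds).neg
      exact (continuous_const.sub continuous_id).rpow_const
        (fun _ => Or.inr (by linarith [hγ.2]))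
    refine h2.continuousOn.congr ?_
    intro s hs
    rcases eq_or_lt_of_le hs.2 with h | h
    · subst h
      have : (1 - γ) ≠ 0 := by linarith [hγ.2]
      simp [hwt, Real.zero_rpow this]
    · have h3 : 0 < t - s := by linarith
      simp only [dslope_of_ne w h.ne, slope_def_field, hwt, sub_zero]
      rw [show (1 - γ) = -γ + 1 by ring, Real.rpow_add_one h3.ne']
      have : s - t ≠ 0 := by linarith
      field_simp
      ring
  have key := intervalIntegral.integral_le_sub_of_hasDeriv_right_of_le ht hcont
    (g' := fun s => (-1 * (-γ) * (t - s) ^ (-γ - 1)) * w s + (t - s) ^ (-γ) * deriv w s)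
    (φ := fun s => (t - s) ^ (-γ) * deriv w s) ?_ ?_ ?_
  · have h0 : 0 ≤ (t - 0) ^ (-γ) * w 0 := mul_nonneg (Real.rpow_nonneg (by linarith) _) (hw0 0)
    simp only [hwt, mul_zero] at key
    linarith
  · intro s hs
    have h3 : 0 < t - s := by linarith [hs.2]
    have h4 : HasDerivAt (fun s => t - s) (-1) s := by
      simpa using (hasDerivAt_id s).const_sub t
    exact ((h4.rpow_const (Or.inl h3.ne')).mul (hd s).hasDerivAt).hasDerivWithinAt
  · have := kernel_integrable hγ t (hw.continuous_deriv (by norm_num))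
    exact (intervalIntegrable_iff_integrableOn_Icc_of_le ht).1 this
  · intro s hs
    have h3 : 0 < t - s := by linarith [hs.2]
    have : 0 ≤ (-1 * (-γ) * (t - s) ^ (-γ - 1)) * w s :=
      mul_nonneg (mul_nonneg (by linarith [hγ.1]) (Real.rpow_nonneg h3.le _)) (hw0 s)
    linarith

lemma caputo_quad {n : ℕ} {γ : ℝ} (hγ : γ ∈ Set.Ioo (0:ℝ) 1)
    (P : Matrix (Fin n) (Fin n) ℝ) (hP : P.PosDef)
    (x : ℝ → Fin n → ℝ) (hx : ContDiff ℝ 1 x) {t : ℝ} (ht : 0 ≤ t) :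
    caputo γ (fun s => (1 / 2) * (x s ⬝ᵥ P.mulVec (x s))) t ≤
      P.mulVec (x t) ⬝ᵥ caputoVec γ x t := by
  have hxi : ∀ i, ContDiff ℝ 1 (fun s => x s i) := fun i => contDiff_pi.1 hx i
  have hsym : Pᵀ = P := by
    have := hP.isHermitian.eq
    rwa [conjTranspose_eq_transpose_of_trivial] at this
  set V : ℝ → ℝ := fun s => (1 / 2) * (x s ⬝ᵥ P.mulVec (x s)) with hV
  set c := P.mulVec (x t) with hc
  have hVd : ContDiff ℝ 1 V := by
    simp only [hV, dotProduct, mulVec]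
    refine contDiff_const.mul (ContDiff.sum fun i _ => (hxi i).mul
      (ContDiff.sum fun j _ => contDiff_const.mul (hxi j)))
  let w : ℝ → ℝ := fun s => V s - ∑ i, c i * x s i + (1/2) * (c ⬝ᵥ x t)
  have hw : ContDiff ℝ 1 w :=
    (hVd.sub (ContDiff.sum fun i _ => contDiff_const.mul (hxi i))).add contDiff_const
  have hweq : ∀ s, w s = (1/2) * ((x s - x t) ⬝ᵥ P.mulVec (x s - x t)) := by
    intro s
    have e1 : x t ⬝ᵥ P.mulVec (x s) = c ⬝ᵥ x s := by
      rw [dotProduct_mulVec, ← mulVec_transpose, hsym]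
    have e2 : x s ⬝ᵥ P.mulVec (x t) = c ⬝ᵥ x s := dotProduct_comm _ _
    have e3 : x t ⬝ᵥ P.mulVec (x t) = c ⬝ᵥ x t := dotProduct_comm _ _
    have e4 : ∑ i, c i * x s i = c ⬝ᵥ x s := rfl
    simp only [w, hV, mulVec_sub, dotProduct_sub, sub_dotProduct, e1, e2, e3, e4]
    ring
  have hw0 : ∀ s, 0 ≤ w s := by
    intro s
    rw [hweq]
    have := hP.posSemidef.dotProduct_mulVec_nonneg (x s - x t)
    simp only [star_trivial] at this
    positivity
  have hwt : w t = 0 := by rw [hweq]; simp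
  have hder : ∀ s, deriv w s = deriv V s - ∑ i, c i * deriv (fun s => x s i) s := by
    intro s
    have h1 := ((hVd.differentiable (by norm_num)) s).hasDerivAt
    have h2 : HasDerivAt (fun s => ∑ i, c i * x s i) (∑ i, c i * deriv (fun s => x s i) s) s :=
      HasDerivAt.fun_sum fun i _ =>
        (((hxi i).differentiable (by norm_num)) s).hasDerivAt.const_mul (c i)
    exact ((h1.sub h2).add_const _).deriv
  have hmain := kernel_nonpos hγ ht hw hw0 hwt
  have hint : ∫ s in (0:ℝ)..t, (t - s) ^ (-γ) * deriv w s =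
      (∫ s in (0:ℝ)..t, (t - s) ^ (-γ) * deriv V s) -
        ∑ i, c i * ∫ s in (0:ℝ)..t, (t - s) ^ (-γ) * deriv (fun s => x s i) s := by
    have hi : ∀ i, IntervalIntegrable
        (fun s => c i * ((t - s) ^ (-γ) * deriv (fun s => x s i) s)) volume 0 t := fun i =>
      (kernel_integrable hγ t ((hxi i).continuous_deriv (by norm_num))).const_mul _
    simp_rw [← intervalIntegral.integral_const_mul]
    rw [← intervalIntegral.integral_finsetSum (fun i _ => hi i),
      ← intervalIntegral.integral_sub (kernel_integrable hγ t (hVd.continuous_deriv (by norm_num)))]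
    · congr 1
      ext s
      rw [hder, mul_sub, Finset.mul_sum]
      congr 1
      exact Finset.sum_congr rfl fun i _ => by ring
    · have := IntervalIntegrable.sum Finset.univ (fun i _ => hi i)
      have e : (fun s => ∑ i, c i * ((t - s) ^ (-γ) * deriv (fun s => x s i) s)) =
          ∑ i, fun s => c i * ((t - s) ^ (-γ) * deriv (fun s => x s i) s) := by
        ext s; simp
      rw [e]
      exact this
  have hG : 0 ≤ 1 / Real.Gamma (1 - γ) :=
    (one_div_pos.2 (Real.Gamma_pos_of_pos (by linarith [hγ.2]))).le
  rw [hint, sub_nonpos] at hmain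
  have := mul_le_mul_of_nonneg_left hmain hG
  refine this.trans (le_of_eq ?_)
  simp only [dotProduct, caputoVec, caputo, Finset.mul_sum]
  exact Finset.sum_congr rfl fun i _ => by ring

/-- Feedback passivation (Theorem 4.2): if the LMI in `(X, Q) = (P⁻¹, F·P⁻¹)` is negative
semidefinite, then the closed-loop system `D^γ x = (A+BF)x + BGv` with output
`y = (C+DF)x + DGv` is passive with storage function `V = (1/2)xᵀPx`. -/
theorem stmt_9 {n m : ℕ} (γ : ℝ) (hγ : γ ∈ Set.Ioo (0:ℝ) 1)
    (A : Matrix (Fin n) (Fin n) ℝ) (B : Matrix (Fin n) (Fin m) ℝ)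
    (C : Matrix (Fin m) (Fin n) ℝ) (D : Matrix (Fin m) (Fin m) ℝ)
    (F : Matrix (Fin m) (Fin n) ℝ) (G : Matrix (Fin m) (Fin m) ℝ)
    (P : Matrix (Fin n) (Fin n) ℝ) (hP : P.PosDef)
    (X : Matrix (Fin n) (Fin n) ℝ) (hX : X = P⁻¹)
    (Q : Matrix (Fin m) (Fin n) ℝ) (hQ : Q = F * X)
    (hLMI : (-(Matrix.fromBlocks
        (A * X + X * Aᵀ + B * Q + Qᵀ * Bᵀ) (B * G - X * Cᵀ - Qᵀ * Dᵀ)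
        (B * G - X * Cᵀ - Qᵀ * Dᵀ)ᵀ (-(D * G) - Gᵀ * Dᵀ))).PosSemidef)
    (x : ℝ → Fin n → ℝ) (hx : ContDiff ℝ 1 x)
    (v : ℝ → Fin m → ℝ) (hv : Continuous v)
    (hdyn : ∀ t ≥ (0:ℝ),
      caputoVec γ x t = (A + B * F).mulVec (x t) + (B * G).mulVec (v t)) :
    ∀ t ≥ (0:ℝ),
      caputo γ (fun s => (1 / 2) * (x s ⬝ᵥ P.mulVec (x s))) t ≤
        v t ⬝ᵥ ((C + D * F).mulVec (x t) + (D * G).mulVec (v t)) := by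
  intro t ht
  refine (caputo_quad hγ P hP x hx ht).trans ?_
  rw [hdyn t ht]
  have hsym : Pᵀ = P := by
    have := hP.isHermitian.eq
    rwa [conjTranspose_eq_transpose_of_trivial] at this
  have hdet : IsUnit P.det := hP.det_pos.ne'.isUnit
  set z := P.mulVec (x t) with hz
  have hxz : x t = X.mulVec z := by
    rw [hz, hX, mulVec_mulVec, nonsing_inv_mul _ hdet, one_mulVec]
  have hXs : Xᵀ = X := by rw [hX, transpose_nonsing_inv, hsym]
  set u := v t
  have h := hLMI.dotProduct_mulVec_nonneg (Sum.elim z u)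
  have tr : ∀ {k l : ℕ} (M : Matrix (Fin k) (Fin l) ℝ) (a : Fin l → ℝ) (b : Fin k → ℝ),
      a ⬝ᵥ Mᵀ.mulVec b = b ⬝ᵥ M.mulVec a := by
    intro k l M a b
    rw [dotProduct_mulVec, vecMul_transpose, dotProduct_comm]
  rw [star_trivial, neg_mulVec, dotProduct_neg, fromBlocks_mulVec, sumElim_dotProduct_sumElim] at h
  have e1 : X * Aᵀ = (A * X)ᵀ := by rw [transpose_mul, hXs]
  have e2 : Qᵀ * Bᵀ = (B * Q)ᵀ := by rw [transpose_mul]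
  have e3 : X * Cᵀ = (C * X)ᵀ := by rw [transpose_mul, hXs]
  have e4 : Qᵀ * Dᵀ = (D * Q)ᵀ := by rw [transpose_mul]
  have e5 : Gᵀ * Dᵀ = (D * G)ᵀ := by rw [transpose_mul]
  rw [e1, e2, e3, e4, e5] at h
  simp only [Sum.elim_comp_inl, Sum.elim_comp_inr, transpose_sub, transpose_transpose, add_mulVec,
    sub_mulVec, neg_mulVec, dotProduct_add, dotProduct_sub, dotProduct_neg, tr] at h
  have f1 : (A + B * F).mulVec (x t) = (A * X).mulVec z + (B * Q).mulVec z := by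
    rw [hxz, mulVec_mulVec, ← add_mulVec, hQ, Matrix.add_mul, Matrix.mul_assoc]
  have f2 : (C + D * F).mulVec (x t) = (C * X).mulVec z + (D * Q).mulVec z := by
    rw [hxz, mulVec_mulVec, ← add_mulVec, hQ, Matrix.add_mul, Matrix.mul_assoc]
  rw [f1, f2]
  simp only [dotProduct_add]
  linarith
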